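/- Under the protocol model, let a ≤ b ≤ c and suppose fail r ≠ ∅ for every round r with a ≤ r ≤ b, and fail r = ∅ for every round r with b+1 ≤ r ≤ c (a maximal unstable period [a, b] followed by a stable period [b+1, c]). Then for every round r with a+2 ≤ r ≤ c+1 and all vehicles i, j, out i r = out j r; that is, no two vehicles use different values during the rounds a+2 through c+1. -/

import Mathlib

/-- Round-r message vector: `none` if the sender missed a message in the
previous round (for `r ≥ 1`), otherwise the sender's input of round `r`. -/
def msg {n : ℕ} {α : Type*} (input : Fin n → ℕ → α) (fail : ℕ → Finset (Fin n))
    (r : ℕ) (j : Fin n) : Option α :=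
  if 1 ≤ r ∧ j ∈ fail (r - 1) then none else some (input j r)

/-- Value used by vehicle `i` at each round. -/
def out {n : ℕ} {α : Type*} (input : Fin n → ℕ → α)
    (dec : (Fin n → Option α) → Option α) (fail : ℕ → Finset (Fin n))
    (i : Fin n) : ℕ → Option α
  | 0 => none
  | r + 1 => if i ∈ fail r then none else dec (msg input fail r)

/-! A message missed in round `r` shows up as `none` in the message vector of round `r + 1`, so
every vehicle uses `⊥` at round `r + 2`, whether or not it missed messages itself. If round `r + 1`
is stable, all vehicles apply `dec` to the same vector. Hence they can differ at round `r + 2` only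
if `r` is stable and `r + 1` is not, that is, just after an unstable period begins. -/

section Protocol

variable {n : ℕ} {α : Type*} {input : Fin n → ℕ → α} {dec : (Fin n → Option α) → Option α}
  {fail : ℕ → Finset (Fin n)} {r : ℕ}

theorem msg_succ_eq_none_iff {j : Fin n} : msg input fail (r + 1) j = none ↔ j ∈ fail r := by
  simp [msg]

theorem none_mem_range_msg_succ_iff :
    none ∈ Set.range (msg input fail (r + 1)) ↔ (fail r).Nonempty := by
  simp only [Set.mem_range, msg_succ_eq_none_iff, Finset.Nonempty]

theorem out_succ_eq_none_of_dec_eq_none (h : dec (msg input fail r) = none) (i : Fin n) :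
    out input dec fail i (r + 1) = none := by
  simp only [out, h, ite_self]

theorem out_succ_eq_dec_of_fail_eq_empty (h : fail r = ∅) (i : Fin n) :
    out input dec fail i (r + 1) = dec (msg input fail r) := by
  simp only [out, h, Finset.notMem_empty, if_false]

theorem out_add_two_eq_none_of_fail_nonempty
    (hdec : ∀ s : Fin n → Option α, none ∈ Set.range s → dec s = none)
    (h : (fail r).Nonempty) (i : Fin n) : out input dec fail i (r + 2) = none :=
  out_succ_eq_none_of_dec_eq_none (hdec _ (none_mem_range_msg_succ_iff.2 h)) i

theorem out_add_two_eq_out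
    (hdec : ∀ s : Fin n → Option α, none ∈ Set.range s → dec s = none)
    (h : (fail r).Nonempty ∨ fail (r + 1) = ∅) (i j : Fin n) :
    out input dec fail i (r + 2) = out input dec fail j (r + 2) := by
  rcases h with unstable | stable
  · rw [out_add_two_eq_none_of_fail_nonempty hdec unstable i,
      out_add_two_eq_none_of_fail_nonempty hdec unstable j]
  · rw [out_succ_eq_dec_of_fail_eq_empty stable i, out_succ_eq_dec_of_fail_eq_empty stable j]

end Protocol

theorem stmt1 {n : ℕ} {α : Type*} (input : Fin n → ℕ → α)
    (dec : (Fin n → Option α) → Option α)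
    (hdec : ∀ s : Fin n → Option α, none ∈ Set.range s → dec s = none)
    (fail : ℕ → Finset (Fin n)) (a b c : ℕ) (hab : a ≤ b) (hbc : b ≤ c)
    (hunstable : ∀ r, a ≤ r → r ≤ b → fail r ≠ ∅)
    (hstable : ∀ r, b + 1 ≤ r → r ≤ c → fail r = ∅) :
    ∀ r, a + 2 ≤ r → r ≤ c + 1 → ∀ i j : Fin n,
      out input dec fail i r = out input dec fail j r := by
  intro r har hrc i j
  obtain ⟨k, rfl⟩ : ∃ k, r = k + 2 := Nat.exists_eq_add_of_le' (by lia)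
  apply out_add_two_eq_out hdec
  rcases le_or_gt k b with hkb | hbk
  · exact .inl (Finset.nonempty_iff_ne_empty.2 (hunstable k (by lia) hkb))
  · exact .inr (hstable (k + 1) (by lia) (by lia))
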